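/- Let K be an algebraically closed field, R = K[x_1, ..., x_d] a polynomial ring, and G = ⟨g⟩ a cyclic group of order t acting linearly on R by g(x_i) = ω x_i for all i, where ω ∈ K is a primitive t-th root of unity. Let S = K[x_1, ..., x_d, y_1, ..., y_d], let I_G be the Derksen ideal, and let n = (x_1, ..., x_d, y_1, ..., y_d). Then I_G^{(n)} S_p = I_G^n S_p for every n ≥ 1 and every prime ideal p of S with p ≠ n. -/

import Mathlib

/-!
Every component `P_g = (yᵢ - g(xᵢ))` is the ideal of the graph of a polynomial map, so the
triangular change of coordinates `zᵢ = yᵢ - g(xᵢ)` carries it to the ideal of the variables `z` in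
`K[x][z]`. Hence `P_g` is prime, and its powers are primary because orders of polynomials add up.

If `g` and `h` act by scalars `a ≠ b`, then `P_g + P_h` contains `(a - b) xᵢ`, so it contains all
the variables, and a prime `p` other than the ideal of the variables contains at most one component
`P`. Write `I_G = P ∩ J` with `J ⊄ p`. Then `P` is an associated prime of `S / I_G`, which gives
`I_G^{(n)} ⊆ Pⁿ`, while `I_G S_p = P S_p` because `J S_p = S_p`. If `p` contains no component, both
sides are the unit ideal.
-/

open MvPolynomial

/-- The `n`-th symbolic power of an ideal `I`:
`I^{(n)} = ⋂_{p ∈ Ass(A/I)} (Iⁿ A_p ∩ A)`. -/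
noncomputable def symbolicPower {A : Type*} [CommRing A] (I : Ideal A) (n : ℕ) : Ideal A :=
  ⨅ (p : Ideal A) (hp : p ∈ associatedPrimes A (A ⧸ I)),
    haveI : p.IsPrime := hp.isPrime
    Ideal.comap (algebraMap A (Localization.AtPrime p))
      (Ideal.map (algebraMap A (Localization.AtPrime p)) (I ^ n))

/-- The component `(y₁ - g(x₁), …, y_d - g(x_d))` of the Derksen ideal, in
`S = K[x₁, …, x_d, y₁, …, y_d]`, where the `x`-variables are indexed by `Sum.inl`
and the `y`-variables by `Sum.inr`. -/
noncomputable def derksenComponent (K : Type*) [Field K] (d : ℕ) {G : Type*} [Group G]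
    [MulSemiringAction G (MvPolynomial (Fin d) K)] (g : G) :
    Ideal (MvPolynomial (Fin d ⊕ Fin d) K) :=
  Ideal.span (Set.range fun i : Fin d =>
    X (Sum.inr i) - rename Sum.inl (g • (X i : MvPolynomial (Fin d) K)))

/-- The Derksen ideal `I_G = ⋂_{g ∈ G} (y₁ - g(x₁), …, y_d - g(x_d))`. -/
noncomputable def derksenIdeal (K : Type*) [Field K] (d : ℕ) (G : Type*) [Group G]
    [MulSemiringAction G (MvPolynomial (Fin d) K)] :
    Ideal (MvPolynomial (Fin d ⊕ Fin d) K) :=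
  ⨅ g : G, derksenComponent K d g

lemma iInf_le_iff_exists_le_of_isPrime {A ι : Type*} [CommSemiring A] [Finite ι] {P : ι → Ideal A}
    {p : Ideal A} [hp : p.IsPrime] : ⨅ i, P i ≤ p ↔ ∃ i, P i ≤ p := by
  cases nonempty_fintype ι
  rw [← Finset.inf_univ_eq_iInf, hp.inf_le']
  simp only [Finset.mem_univ, true_and]

lemma isPrimary_map_ringEquiv {A B : Type*} [CommSemiring A] [CommSemiring B] (e : A ≃+* B)
    {I : Ideal A} (hI : I.IsPrimary) : (I.map (e : A →+* B)).IsPrimary := by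
  rw [Ideal.map_comap_of_equiv]
  exact hI.comap (e.symm : B →+* A)

section SymbolicPower

variable {A : Type*} [CommRing A]

lemma pow_le_symbolicPower (I : Ideal A) (n : ℕ) : I ^ n ≤ symbolicPower I n :=
  le_iInf₂ fun _ _ => Ideal.le_comap_map

lemma symbolicPower_zero (I : Ideal A) : symbolicPower I 0 = ⊤ := by
  simpa only [pow_zero, Ideal.one_eq_top, top_le_iff] using pow_le_symbolicPower I 0

lemma mem_associatedPrimes_quotient_inf {P J : Ideal A} [hP : P.IsPrime] (hJ : ¬J ≤ P) :
    P ∈ associatedPrimes A (A ⧸ P ⊓ J) := by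
  obtain ⟨s, hsJ, hsP⟩ := SetLike.not_le_iff_exists.mp hJ
  have colon_eq : (⊥ : Submodule A (A ⧸ P ⊓ J)).colon {Ideal.Quotient.mk (P ⊓ J) s} = P := by
    ext r
    rw [Submodule.mem_colon_singleton, Submodule.mem_bot, Algebra.smul_def,
      Ideal.Quotient.algebraMap_eq, ← map_mul, Ideal.Quotient.eq_zero_iff_mem]
    exact ⟨fun h => (hP.mem_or_mem h.1).resolve_right hsP,
      fun h => ⟨P.mul_mem_right s h, J.mul_mem_left r hsJ⟩⟩
  exact ⟨hP, Ideal.Quotient.mk _ s, by rw [colon_eq, hP.radical]⟩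

lemma symbolicPower_le_pow_of_isPrimary {I P : Ideal A} {n : ℕ}
    (hP : P ∈ associatedPrimes A (A ⧸ I)) (hPn : (P ^ n).IsPrimary) :
    symbolicPower I n ≤ P ^ n := by
  have := hP.isPrime
  have hn : n ≠ 0 := by
    rintro rfl
    exact hPn.ne_top (by rw [pow_zero, Ideal.one_eq_top])
  have hIP : I ≤ P := by simpa only [Submodule.annihilator_top, Ideal.annihilator_quotient]
    using hP.annihilator_le
  intro f hf
  obtain ⟨u, huP, huf⟩ : ∃ u ∈ P.primeCompl, u * f ∈ I ^ n :=
    (IsLocalization.algebraMap_mem_map_algebraMap_iff P.primeCompl (Localization.AtPrime P) _ _).mp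
      ((Submodule.mem_iInf _).mp ((Submodule.mem_iInf _).mp hf P) hP)
  have hfu : f * u ∈ P ^ n := mul_comm u f ▸ Ideal.pow_right_mono hIP n huf
  refine ((Ideal.isPrimary_iff.mp hPn).2 hfu).resolve_right fun hu => huP ?_
  rwa [Ideal.radical_pow P hn, this.radical] at hu

section Localization

variable (S : Type*) [CommRing S] [Algebra A S]
  (p : Ideal A) [p.IsPrime] [IsLocalization.AtPrime S p]

include p

lemma map_algebraMap_atPrime_eq_top {J : Ideal A} (hJ : ¬J ≤ p) :
    J.map (algebraMap A S) = ⊤ := by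
  obtain ⟨s, hsJ, hsp⟩ := SetLike.not_le_iff_exists.mp hJ
  exact Ideal.eq_top_of_isUnit_mem _ (Ideal.mem_map_of_mem _ hsJ)
    (IsLocalization.map_units S (⟨s, hsp⟩ : p.primeCompl))

lemma map_algebraMap_atPrime_inf_eq_left (P : Ideal A) {J : Ideal A} (hJ : ¬J ≤ p) :
    (P ⊓ J).map (algebraMap A S) = P.map (algebraMap A S) := by
  rw [IsLocalization.map_inf p.primeCompl, map_algebraMap_atPrime_eq_top S p hJ, inf_top_eq]

lemma map_symbolicPower_inf {P J : Ideal A} [P.IsPrime] {n : ℕ} (hPn : (P ^ n).IsPrimary)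
    (hP : P ≤ p) (hJ : ¬J ≤ p) :
    (symbolicPower (P ⊓ J) n).map (algebraMap A S) = ((P ⊓ J) ^ n).map (algebraMap A S) := by
  refine le_antisymm ?_ (Ideal.map_mono (pow_le_symbolicPower _ _))
  have hass : P ∈ associatedPrimes A (A ⧸ P ⊓ J) :=
    mem_associatedPrimes_quotient_inf fun h => hJ (h.trans hP)
  calc (symbolicPower (P ⊓ J) n).map (algebraMap A S)
    _ ≤ (P ^ n).map (algebraMap A S) :=
      Ideal.map_mono (symbolicPower_le_pow_of_isPrimary hass hPn)
    _ = ((P ⊓ J) ^ n).map (algebraMap A S) := by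
      rw [Ideal.map_pow, Ideal.map_pow, map_algebraMap_atPrime_inf_eq_left S p P hJ]

lemma map_symbolicPower_iInf {ι : Type*} [Finite ι] {P : ι → Ideal A} [∀ i, (P i).IsPrime] {n : ℕ}
    (hPn : ∀ i, (P i ^ n).IsPrimary) (hp : ∀ i j, P i ≤ p → P j ≤ p → P i = P j) :
    (symbolicPower (⨅ i, P i) n).map (algebraMap A S) =
      ((⨅ i, P i) ^ n).map (algebraMap A S) := by
  by_cases hex : ∃ i, P i ≤ p
  · obtain ⟨i, hi⟩ := hex
    have hJ : ¬⨅ j : {j // ¬P j ≤ p}, P j ≤ p := by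
      rw [iInf_le_iff_exists_le_of_isPrime]
      exact fun ⟨j, hj⟩ => j.2 hj
    have iInf_eq : ⨅ i, P i = P i ⊓ ⨅ j : {j // ¬P j ≤ p}, P j := by
      refine le_antisymm (le_inf (iInf_le _ i) (le_iInf fun j => iInf_le _ j.1))
        (le_iInf fun j => ?_)
      by_cases hj : P j ≤ p
      · exact inf_le_left.trans (hp i j hi hj).le
      · exact inf_le_right.trans (iInf_le (fun j : {j // ¬P j ≤ p} => P j) ⟨j, hj⟩)
    rw [iInf_eq]
    exact map_symbolicPower_inf S p (hPn i) hi hJ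
  · have hI : ¬(⨅ i, P i) ^ n ≤ p := fun h =>
      hex (iInf_le_iff_exists_le_of_isPrime.mp (Ideal.IsPrime.le_of_pow_le h))
    rw [map_algebraMap_atPrime_eq_top S p hI, map_algebraMap_atPrime_eq_top S p
      fun h => hI ((pow_le_symbolicPower _ n).trans h)]

end Localization

end SymbolicPower

section IdealOfVars

variable (σ R : Type*) [CommSemiring R]

lemma idealOfVars_eq_ker_constantCoeff :
    idealOfVars σ R = RingHom.ker (constantCoeff : MvPolynomial σ R →+* R) := by
  ext f
  rw [← pow_one (idealOfVars σ R), mem_pow_idealOfVars_iff', RingHom.mem_ker, constantCoeff_eq]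
  simp only [Nat.lt_one_iff, Finsupp.degree_eq_zero_iff, forall_eq]

lemma idealOfVars_isPrime [IsDomain R] : (idealOfVars σ R).IsPrime :=
  idealOfVars_eq_ker_constantCoeff σ R ▸ RingHom.ker_isPrime _

lemma idealOfVars_isMaximal (K : Type*) [Field K] : (idealOfVars σ K).IsMaximal :=
  idealOfVars_eq_ker_constantCoeff σ K ▸
    RingHom.ker_isMaximal_of_surjective _ fun a => ⟨C a, constantCoeff_C σ a⟩

variable {σ R}

lemma mem_pow_idealOfVars_iff_le_order {n : ℕ} {f : MvPolynomial σ R} :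
    f ∈ idealOfVars σ R ^ n ↔ n ≤ (f : MvPowerSeries σ R).order := by
  rw [mem_pow_idealOfVars_iff']
  refine ⟨fun h => MvPowerSeries.le_order fun m hm => ?_, fun h m hm => ?_⟩
  · rw [coeff_coe]
    exact h m (by exact_mod_cast hm)
  · rw [← coeff_coe]
    exact MvPowerSeries.coeff_of_lt_order (lt_of_lt_of_le (by exact_mod_cast hm) h)

lemma isPrimary_pow_idealOfVars [IsDomain R] {n : ℕ} (hn : n ≠ 0) :
    (idealOfVars σ R ^ n).IsPrimary := by
  have hprime := idealOfVars_isPrime σ R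
  rw [Ideal.isPrimary_iff]
  refine ⟨fun h => hprime.ne_top (top_le_iff.mp (h ▸ Ideal.pow_le_self hn)), fun {f u} hfu => ?_⟩
  rw [Ideal.radical_pow _ hn, hprime.radical, or_iff_not_imp_right]
  intro hu
  have order_u : (u : MvPowerSeries σ R).order = 0 := by
    rw [← pow_one (idealOfVars σ R), mem_pow_idealOfVars_iff_le_order] at hu
    simpa using hu
  rw [mem_pow_idealOfVars_iff_le_order] at hfu ⊢
  simpa only [coe_mul, MvPowerSeries.order_mul, order_u, add_zero] using hfu

end IdealOfVars

section GraphIdeal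

variable {σ τ R : Type*} [CommRing R]

/-- The ideal `(yᵢ - φᵢ(x))ᵢ` of `R[x, y]`, which defines the graph of the polynomial map `φ`; the
`x`-variables are indexed by `Sum.inl` and the `y`-variables by `Sum.inr`. -/
noncomputable def graphIdeal (φ : τ → MvPolynomial σ R) : Ideal (MvPolynomial (σ ⊕ τ) R) :=
  Ideal.span (Set.range fun i => X (Sum.inr i) - rename Sum.inl (φ i))

/-- The change of coordinates `zᵢ = yᵢ - φᵢ(x)`, as an isomorphism from `R[x][z]` to `R[x, y]`. -/
noncomputable def graphEquiv (φ : τ → MvPolynomial σ R) :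
    MvPolynomial τ (MvPolynomial σ R) ≃ₐ[R] MvPolynomial (σ ⊕ τ) R :=
  AlgEquiv.ofAlgHom
    (aevalTower (rename Sum.inl) fun i => X (Sum.inr i) - rename Sum.inl (φ i))
    (aeval (Sum.elim (C ∘ X) fun i => X i + C (φ i)))
    (by ext (i | i) <;> simp)
    (by ext <;> simp [aeval_rename])

lemma map_graphEquiv_idealOfVars (φ : τ → MvPolynomial σ R) :
    (idealOfVars τ (MvPolynomial σ R)).map (graphEquiv φ) = graphIdeal φ := by
  rw [idealOfVars, Ideal.map_span, ← Set.range_comp]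
  simp only [graphIdeal, graphEquiv, Function.comp_def, AlgEquiv.ofAlgHom_apply, aevalTower_X]

lemma graphIdeal_isPrime [IsDomain R] (φ : τ → MvPolynomial σ R) : (graphIdeal φ).IsPrime := by
  have := idealOfVars_isPrime τ (MvPolynomial σ R)
  rw [← map_graphEquiv_idealOfVars]
  exact Ideal.map_isPrime_of_equiv (graphEquiv φ)

lemma isPrimary_pow_graphIdeal [IsDomain R] (φ : τ → MvPolynomial σ R) {n : ℕ} (hn : n ≠ 0) :
    (graphIdeal φ ^ n).IsPrimary := by
  rw [← map_graphEquiv_idealOfVars, ← Ideal.map_pow]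
  exact isPrimary_map_ringEquiv (graphEquiv φ).toRingEquiv (isPrimary_pow_idealOfVars hn)

lemma idealOfVars_le_graphIdeal_sup_graphIdeal {a b : R} (hab : IsUnit (a - b)) :
    idealOfVars (σ ⊕ σ) R ≤
      graphIdeal (fun i : σ => C a * X i) ⊔ graphIdeal (fun i : σ => C b * X i) := by
  set I := graphIdeal (fun i : σ => C a * X i) ⊔ graphIdeal (fun i : σ => C b * X i)
  have mem_a (i : σ) : X (Sum.inr i) - C a * X (Sum.inl i) ∈ I :=
    Ideal.mem_sup_left (Ideal.subset_span ⟨i, by simp only [map_mul, rename_C, rename_X]⟩)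
  have mem_b (i : σ) : X (Sum.inr i) - C b * X (Sum.inl i) ∈ I :=
    Ideal.mem_sup_right (Ideal.subset_span ⟨i, by simp only [map_mul, rename_C, rename_X]⟩)
  have mem_inl (i : σ) : X (Sum.inl i) ∈ I := by
    rw [← I.unit_mul_mem_iff_mem (hab.map C)]
    convert I.sub_mem (mem_b i) (mem_a i) using 1
    rw [C_sub]
    ring
  rw [Ideal.span_le]
  rintro _ ⟨i | i, rfl⟩
  · exact mem_inl i
  · exact (I.sub_mem_iff_left (I.mul_mem_left (C a) (mem_inl i))).mp (mem_a i)

end GraphIdeal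

section Derksen

lemma exists_smul_X_eq_C_mul_X_of_mem_powers {R σ M : Type*} [CommSemiring R] [Monoid M]
    [MulSemiringAction M (MvPolynomial σ R)] {g h : M} {ω : R}
    (hC : ∀ c : R, g • (C c : MvPolynomial σ R) = C c)
    (hX : ∀ i : σ, g • (X i : MvPolynomial σ R) = C ω * X i) (hh : h ∈ Submonoid.powers g) :
    ∃ c : R, ∀ i : σ, h • (X i : MvPolynomial σ R) = C c * X i := by
  rw [Submonoid.mem_powers_iff] at hh
  obtain ⟨k, rfl⟩ := hh
  refine ⟨ω ^ k, fun i => ?_⟩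
  induction k with
  | zero => simp
  | succ k ih => rw [pow_succ', mul_smul, ih, smul_mul', hC, hX, pow_succ, C_mul, mul_assoc]

variable {K : Type*} [Field K] {d : ℕ} {G : Type*} [Group G]
  [MulSemiringAction G (MvPolynomial (Fin d) K)]

lemma derksenComponent_eq_graphIdeal (g : G) :
    derksenComponent K d g = graphIdeal fun i : Fin d => g • (X i : MvPolynomial (Fin d) K) :=
  rfl

lemma map_symbolicPower_derksenIdeal [Finite G] (n : ℕ)
    (S : Type*) [CommRing S] [Algebra (MvPolynomial (Fin d ⊕ Fin d) K) S]
    (p : Ideal (MvPolynomial (Fin d ⊕ Fin d) K)) [p.IsPrime] [IsLocalization.AtPrime S p]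
    (hp : ∀ g h : G, derksenComponent K d g ≤ p → derksenComponent K d h ≤ p →
      derksenComponent K d g = derksenComponent K d h) :
    (symbolicPower (derksenIdeal K d G) n).map (algebraMap _ S) =
      (derksenIdeal K d G ^ n).map (algebraMap _ S) := by
  obtain rfl | hn := eq_or_ne n 0
  · rw [symbolicPower_zero, pow_zero, Ideal.one_eq_top]
  have (g : G) : (derksenComponent K d g).IsPrime := graphIdeal_isPrime _
  exact map_symbolicPower_iInf S p (fun g => isPrimary_pow_graphIdeal _ hn) hp

end Derksen

theorem symbolicPower_derksenIdeal_cyclic_localized_general {K : Type*} [Field K]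
    (d : ℕ) (G : Type*) [Group G] [Finite G] [MulSemiringAction G (MvPolynomial (Fin d) K)]
    (hscalar : ∀ σ : G, ∃ c : K, ∀ i : Fin d, σ • (X i : MvPolynomial (Fin d) K) = C c * X i)
    (n : ℕ) (p : Ideal (MvPolynomial (Fin d ⊕ Fin d) K)) [hprime : p.IsPrime]
    (hp : p ≠ idealOfVars (Fin d ⊕ Fin d) K) :
    Ideal.map (algebraMap (MvPolynomial (Fin d ⊕ Fin d) K) (Localization.AtPrime p))
        (symbolicPower (derksenIdeal K d G) n) =
      Ideal.map (algebraMap (MvPolynomial (Fin d ⊕ Fin d) K) (Localization.AtPrime p))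
        (derksenIdeal K d G ^ n) := by
  refine map_symbolicPower_derksenIdeal n _ p fun g h hg hh => ?_
  obtain ⟨a, ha⟩ := hscalar g
  obtain ⟨b, hb⟩ := hscalar h
  simp only [derksenComponent_eq_graphIdeal, ha, hb] at hg hh ⊢
  by_contra hne
  have hab : a ≠ b := by
    rintro rfl
    exact hne rfl
  have vars_le : idealOfVars (Fin d ⊕ Fin d) K ≤ p :=
    (idealOfVars_le_graphIdeal_sup_graphIdeal (sub_ne_zero.mpr hab).isUnit).trans (sup_le hg hh)
  exact hp ((idealOfVars_isMaximal _ K).eq_of_le hprime.ne_top vars_le).symm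

/-- For the cyclic group `G = ⟨g⟩` of order `t` acting on `K[x₁, …, x_d]` by
`g(xᵢ) = ω xᵢ` with `ω` a primitive `t`-th root of unity, symbolic and ordinary powers of
the Derksen ideal agree after localization at any prime different from the homogeneous
maximal ideal. -/
theorem symbolicPower_derksenIdeal_cyclic_localized {K : Type*} [Field K] [IsAlgClosed K]
    (d t : ℕ) (G : Type*) [Group G] [Finite G]
    [MulSemiringAction G (MvPolynomial (Fin d) K)]
    (g : G) (hgen : ∀ x : G, x ∈ Subgroup.zpowers g) (hord : orderOf g = t)
    (ω : K) (hω : IsPrimitiveRoot ω t)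
    (hC : ∀ (σ : G) (c : K), σ • (C c : MvPolynomial (Fin d) K) = C c)
    (hact : ∀ i : Fin d, g • (X i : MvPolynomial (Fin d) K) = C ω * X i)
    (n : ℕ) (hn : 1 ≤ n)
    (p : Ideal (MvPolynomial (Fin d ⊕ Fin d) K)) [p.IsPrime]
    (hp : p ≠ Ideal.span (Set.range (X : Fin d ⊕ Fin d → MvPolynomial (Fin d ⊕ Fin d) K))) :
    Ideal.map (algebraMap (MvPolynomial (Fin d ⊕ Fin d) K) (Localization.AtPrime p))
        (symbolicPower (derksenIdeal K d G) n) =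
      Ideal.map (algebraMap (MvPolynomial (Fin d ⊕ Fin d) K) (Localization.AtPrime p))
        (derksenIdeal K d G ^ n) :=
  symbolicPower_derksenIdeal_cyclic_localized_general d G
    (fun σ => exists_smul_X_eq_C_mul_X_of_mem_powers (hC g) hact
      (mem_powers_iff_mem_zpowers.mpr (hgen σ))) n p hp
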